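/- Let n ≥ 2 and let Π be a set, and suppose each x ∈ Π is assigned a finite set T(x) ⊆ {1,…,n} × {1,…,n} × ℝ with |T(x)| ≤ n². For each ρ ∈ ℝⁿ define the inconsistency function Δ_ρ : Π → ℝ by Δ_ρ(x) = Σ_{(i,j,w) ∈ T(x)} max{ρ_i − ρ_j − w, 0}. Then there is an absolute constant C > 0 such that any pairwise distinct x_1, …, x_N ∈ Π pseudo-shattered by the family Û = {Δ_ρ : ρ ∈ ℝⁿ} satisfy N ≤ C·n·log₂ n; that is, the pseudo-dimension of Û is O(n lg n). -/

import Mathlib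

/-!
Let the functions `f e` lie in a vector space `F` of real functions on the parameter set, of
dimension `d`. A set of indices `e` that is shattered by the signs of the `f e` is linearly
independent: at a parameter where the signs of `f e` are those of the coefficients of a linear
relation, every term of the relation is nonnegative, and positive if its coefficient is negative.
So the sign patterns have VC dimension at most `d`, and by the Sauer–Shelah lemma `M` of the
functions have at most `s ^ d * exp (M / s)` of them, for every `s ≥ 1`.

On the parameters where the signs of all terms are prescribed, a sum of positive parts
`max (f e) 0` agrees with an element of `F`. Hence `N` thresholded sums of at most `m` terms realise
at most `s ^ d * exp (N m / s) * (t ^ d * exp (N / t))` patterns, one factor counting the regions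
and the other the patterns within a region. Shattering requires `2 ^ N` of them, and `s = 8 m`,
`t = 8` gives `N = O(d log m)`.
-/

open Finset Module

section SauerShelah

variable {α : Type*} [DecidableEq α]

-- Weight each shattered set `S` by `s ^ (d - #S) ≥ 1` and sum over all subsets of `U`.
theorem card_le_pow_vcDim_mul_exp {𝒜 : Finset (Finset α)} {U : Finset α}
    (hU : ∀ A ∈ 𝒜, A ⊆ U) {s : ℝ} (hs : 1 ≤ s) :
    (#𝒜 : ℝ) ≤ s ^ 𝒜.vcDim * Real.exp (#U / s) := by
  have hs₀ : 0 < s := one_pos.trans_le hs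
  have shatterer_subset : 𝒜.shatterer ⊆ U.powerset := fun S hS => by
    obtain ⟨A, hA, hSA⟩ := (mem_shatterer.1 hS).exists_superset
    exact mem_powerset.2 (hSA.trans (hU A hA))
  have one_le_weight : ∀ S ∈ 𝒜.shatterer, 1 ≤ s ^ 𝒜.vcDim * s⁻¹ ^ #S := fun S hS => by
    rw [inv_pow, ← div_eq_mul_inv, one_le_div (pow_pos hs₀ _)]
    exact pow_le_pow_right₀ hs (mem_shatterer.1 hS).card_le_vcDim
  calc (#𝒜 : ℝ) ≤ #𝒜.shatterer := by exact_mod_cast card_le_card_shatterer 𝒜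
    _ ≤ ∑ S ∈ 𝒜.shatterer, s ^ 𝒜.vcDim * s⁻¹ ^ #S := by
        simpa using sum_le_sum one_le_weight
    _ ≤ ∑ S ∈ U.powerset, s ^ 𝒜.vcDim * s⁻¹ ^ #S :=
        sum_le_sum_of_subset_of_nonneg shatterer_subset fun _ _ _ => by positivity
    _ = s ^ 𝒜.vcDim * (s⁻¹ + 1) ^ #U := by
        rw [← mul_sum, ← sum_pow_mul_eq_add_pow]
        simp only [one_pow, mul_one]
    _ ≤ s ^ 𝒜.vcDim * Real.exp s⁻¹ ^ #U := by
        gcongr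
        exact Real.add_one_le_exp _
    _ = s ^ 𝒜.vcDim * Real.exp (#U / s) := by
        rw [← Real.exp_nat_mul, div_eq_mul_inv]

end SauerShelah

section SignPatterns

variable {X E : Type*}

/-- The nonnegativity pattern of the functions `f e`, `e ∈ U`, at the point `y`. -/
noncomputable def signPattern (f : E → X → ℝ) (U : Finset E) (y : X) : Finset E :=
  {e ∈ U | 0 ≤ f e y}

theorem mem_signPattern {f : E → X → ℝ} {U : Finset E} {y : X} {e : E} :
    e ∈ signPattern f U y ↔ e ∈ U ∧ 0 ≤ f e y :=
  mem_filter

open Classical in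
/-- All nonnegativity patterns of the functions `f e`, `e ∈ U`, at points of `X`; they form a set
family on `E`, whose Vapnik–Chervonenkis dimension controls their number. -/
noncomputable def signPatterns (f : E → X → ℝ) (U : Finset E) : Finset (Finset E) :=
  {A ∈ U.powerset | A ∈ Set.range (signPattern f U)}

theorem mem_signPatterns {f : E → X → ℝ} {U A : Finset E} :
    A ∈ signPatterns f U ↔ ∃ y, signPattern f U y = A := by
  simp only [signPatterns, mem_filter, mem_powerset, Set.mem_range, and_iff_right_iff_imp]
  rintro ⟨y, rfl⟩
  exact filter_subset _ _

theorem subset_of_mem_signPatterns {f : E → X → ℝ} {U A : Finset E}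
    (hA : A ∈ signPatterns f U) : A ⊆ U := by
  obtain ⟨y, rfl⟩ := mem_signPatterns.1 hA
  exact filter_subset _ _

section Shattering

variable [DecidableEq E]

theorem exists_nonneg_iff_of_shatters {f : E → X → ℝ} {U S : Finset E}
    (hS : (signPatterns f U).Shatters S) (p : S → Prop) :
    ∃ y, ∀ e : S, 0 ≤ f e y ↔ p e := by
  classical
  obtain ⟨A, hA, hSA⟩ := hS (t := {e ∈ S | ∃ h : e ∈ S, p ⟨e, h⟩}) (filter_subset _ _)
  obtain ⟨B, hB, hSB⟩ := hS.exists_superset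
  obtain ⟨y, rfl⟩ := mem_signPatterns.1 hA
  refine ⟨y, fun e => ?_⟩
  have he : (e : E) ∈ U := subset_of_mem_signPatterns hB (hSB e.2)
  simpa [mem_signPattern, he] using Finset.ext_iff.1 hSA e

theorem coeff_nonneg_of_shatters {f : E → X → ℝ} {U S : Finset E}
    (hS : (signPatterns f U).Shatters S) {c : S → ℝ} (hc : ∑ e, c e • f e = 0) (e : S) :
    0 ≤ c e := by
  obtain ⟨y, hy⟩ := exists_nonneg_iff_of_shatters hS (fun e => 0 ≤ c e)
  have term_nonneg (e : S) : 0 ≤ c e * f e y := by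
    rcases le_or_gt 0 (c e) with h | h
    · exact mul_nonneg h ((hy e).2 h)
    · exact mul_nonneg_of_nonpos_of_nonpos h.le (not_le.1 (mt (hy e).1 h.not_ge)).le
  have sum_terms : ∑ e, c e * f e y = 0 := by
    simpa [Finset.sum_apply] using congrFun hc y
  have term_eq_zero : c e * f e y = 0 :=
    (sum_eq_zero_iff_of_nonneg fun e _ => term_nonneg e).1 sum_terms e (mem_univ e)
  by_contra h
  have hf : f e y < 0 := not_le.1 (mt (hy e).1 h)
  exact (mul_pos_of_neg_of_neg (not_le.1 h) hf).ne' term_eq_zero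

theorem linearIndependent_of_shatters {f : E → X → ℝ} {U S : Finset E}
    (hS : (signPatterns f U).Shatters S) : LinearIndependent ℝ (fun e : S => f e) := by
  refine Fintype.linearIndependent_iff.2 fun c hc e => ?_
  have neg_relation : ∑ e, (-c e) • f e = 0 := by
    simp only [neg_smul, sum_neg_distrib, hc, neg_zero]
  exact le_antisymm (neg_nonneg.1 (coeff_nonneg_of_shatters hS neg_relation e))
    (coeff_nonneg_of_shatters hS hc e)

theorem vcDim_signPatterns_le_finrank {F : Submodule ℝ (X → ℝ)} [FiniteDimensional ℝ F]
    {f : E → X → ℝ} (hf : ∀ e, f e ∈ F) (U : Finset E) :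
    (signPatterns f U).vcDim ≤ finrank ℝ F := by
  refine Finset.sup_le fun S hS => ?_
  have independent : LinearIndependent ℝ (fun e : S => (⟨f e, hf e⟩ : F)) :=
    .of_comp F.subtype (linearIndependent_of_shatters (mem_shatterer.1 hS))
  simpa using independent.fintype_card_le_finrank

end Shattering

theorem card_signPatterns_le {F : Submodule ℝ (X → ℝ)} [FiniteDimensional ℝ F]
    {f : E → X → ℝ} (hf : ∀ e, f e ∈ F) (U : Finset E) {s : ℝ} (hs : 1 ≤ s) :
    (#(signPatterns f U) : ℝ) ≤ s ^ finrank ℝ F * Real.exp (#U / s) := by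
  classical
  calc (#(signPatterns f U) : ℝ) ≤ s ^ (signPatterns f U).vcDim * Real.exp (#U / s) :=
        card_le_pow_vcDim_mul_exp (fun _ => subset_of_mem_signPatterns) hs
    _ ≤ s ^ finrank ℝ F * Real.exp (#U / s) := by
        gcongr
        exact vcDim_signPatterns_le_finrank hf U

end SignPatterns

section HingeSums

variable {X E P ι : Type*}

/-- The family of functions `h ρ`, `ρ : X`, pseudo-shatters the points `x i`: for suitable
thresholds `z i`, every pattern of the comparisons `z i ≤ h ρ (x i)` occurs for some `ρ`. -/
def PseudoShatters (h : X → P → ℝ) (x : ι → P) : Prop :=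
  ∃ z : ι → ℝ, ∀ b : ι → Bool, ∃ ρ : X, ∀ i, z i ≤ h ρ (x i) ↔ b i = true

/-- The sum of the positive parts of the functions `f e`, `e ∈ T`. The inconsistency functions are
the case in which `e` is a weighted edge `(i, j, w)` and `f e ρ = ρ i - ρ j - w`. -/
noncomputable def hingeSum (f : E → X → ℝ) (T : Finset E) (ρ : X) : ℝ :=
  ∑ e ∈ T, max (f e ρ) 0

theorem hingeSum_eq_sum_inter_signPattern [DecidableEq E] (f : E → X → ℝ) {T U : Finset E}
    (hTU : T ⊆ U) (ρ : X) : hingeSum f T ρ = ∑ e ∈ T ∩ signPattern f U ρ, f e ρ := by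
  rw [hingeSum, ← filter_mem_eq_inter, sum_filter]
  refine sum_congr rfl fun e he => ?_
  simp only [mem_signPattern, hTU he, true_and]
  split_ifs with h
  · exact max_eq_left h
  · exact max_eq_right (not_le.1 h).le

variable [Fintype ι] {F : Submodule ℝ (X → ℝ)} [FiniteDimensional ℝ F]

theorem two_pow_card_le_of_pseudoShatters (hF : 1 ∈ F) {f : E → X → ℝ} (hf : ∀ e, f e ∈ F)
    {T : P → Finset E} {m : ℕ} (hT : ∀ p, #(T p) ≤ m) {x : ι → P}
    (hx : PseudoShatters (fun ρ p => hingeSum f (T p) ρ) x) {s t : ℝ} (hs : 1 ≤ s)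
    (ht : 1 ≤ t) :
    (2 : ℝ) ^ Fintype.card ι ≤
      s ^ finrank ℝ F * Real.exp (Fintype.card ι * m / s) *
        (t ^ finrank ℝ F * Real.exp (Fintype.card ι / t)) := by
  classical
  obtain ⟨z, hz⟩ := hx
  let U : Finset E := univ.biUnion fun i => T (x i)
  let piece (σ : Finset E) (i : ι) : X → ℝ := (∑ e ∈ T (x i) ∩ σ, f e) - z i • 1
  have piece_mem (σ : Finset E) (i : ι) : piece σ i ∈ F :=
    F.sub_mem (F.sum_mem fun e _ => hf e) (F.smul_mem _ hF)
  have card_U : #U ≤ Fintype.card ι * m := card_biUnion_le_card_mul _ _ _ fun i _ => hT (x i)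
  have cover : (univ : Finset (Finset ι)) ⊆
      (signPatterns f U).biUnion fun σ => signPatterns (piece σ) univ := fun S _ => by
    obtain ⟨ρ, hρ⟩ := hz fun i => decide (i ∈ S)
    refine mem_biUnion.2 ⟨signPattern f U ρ, mem_signPatterns.2 ⟨ρ, rfl⟩,
      mem_signPatterns.2 ⟨ρ, Finset.ext fun i => ?_⟩⟩
    have hi : T (x i) ⊆ U := subset_biUnion_of_mem (fun i => T (x i)) (mem_univ i)
    simpa [mem_signPattern, piece, hingeSum_eq_sum_inter_signPattern f hi] using hρ i
  calc (2 : ℝ) ^ Fintype.card ι = #(univ : Finset (Finset ι)) := by simp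
    _ ≤ ∑ σ ∈ signPatterns f U, (#(signPatterns (piece σ) univ) : ℝ) := by
        exact_mod_cast (card_le_card cover).trans card_biUnion_le
    _ ≤ #(signPatterns f U) * (t ^ finrank ℝ F * Real.exp (Fintype.card ι / t)) := by
        rw [← nsmul_eq_mul]
        exact sum_le_card_nsmul _ _ _ fun σ _ => card_signPatterns_le (piece_mem σ) univ ht
    _ ≤ s ^ finrank ℝ F * Real.exp (#U / s) *
          (t ^ finrank ℝ F * Real.exp (Fintype.card ι / t)) := by
        gcongr
        exact card_signPatterns_le hf U hs
    _ ≤ _ := by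
        gcongr
        exact_mod_cast card_U

theorem le_mul_logb_of_two_pow_le {N d m : ℕ} (hm : 2 ≤ m)
    (h : (2 : ℝ) ^ N ≤
      (8 * m) ^ d * Real.exp (N * m / (8 * m)) * (8 ^ d * Real.exp (N / 8))) :
    (N : ℝ) ≤ 12 * d * Real.logb 2 m := by
  have hm₀ : (0 : ℝ) < m := by positivity
  have log_two : 0.6 < Real.log 2 := by linarith [Real.log_two_gt_d9]
  have log_eight : Real.log 8 = 3 * Real.log 2 := by
    rw [show (8 : ℝ) = 2 ^ 3 by norm_num, Real.log_pow, Nat.cast_ofNat]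
  have one_le_logb : 1 ≤ Real.logb 2 m := by
    rw [Real.le_logb_iff_rpow_le one_lt_two hm₀, Real.rpow_one]
    exact_mod_cast hm
  have log_m : Real.log m = Real.logb 2 m * Real.log 2 :=
    (div_mul_cancel₀ _ (by positivity)).symm
  have log_le : N * Real.log 2 ≤ d * (Real.log m + 6 * Real.log 2) + N / 4 := by
    have := Real.log_le_log (by positivity) h
    rw [mul_div_mul_right _ _ hm₀.ne', Real.log_mul (by positivity) (by positivity),
      Real.log_mul (by positivity) (by positivity), Real.log_mul (by positivity) (by positivity),
      Real.log_exp, Real.log_pow, Real.log_pow, Real.log_pow, Real.log_mul (by norm_num) hm₀.ne',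
      log_eight] at this
    linarith
  have absorb_constant :
      d * (Real.log m + 6 * Real.log 2) ≤ d * (7 * Real.logb 2 m * Real.log 2) := by
    rw [log_m]
    gcongr
    nlinarith
  have absorb_quarter : (N : ℝ) / 4 ≤ 5 / 12 * (N * Real.log 2) := by
    nlinarith [N.cast_nonneg (α := ℝ)]
  refine le_of_mul_le_mul_right ?_ (show 0 < Real.log 2 by positivity)
  linarith

theorem stmt_10_general (hF : 1 ∈ F) {f : E → X → ℝ} (hf : ∀ e, f e ∈ F) {T : P → Finset E}
    {m : ℕ} (hm : 2 ≤ m) (hT : ∀ p, #(T p) ≤ m) {x : ι → P}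
    (hx : PseudoShatters (fun ρ p => hingeSum f (T p) ρ) x) :
    (Fintype.card ι : ℝ) ≤ 12 * finrank ℝ F * Real.logb 2 m := by
  have one_le_m : (1 : ℝ) ≤ m := by exact_mod_cast one_le_two.trans hm
  exact le_mul_logb_of_two_pow_le hm
    (two_pow_card_le_of_pseudoShatters hF hf hT hx (by linarith) (by norm_num))

end HingeSums

section AffineFunctions

variable (κ : Type*)

/-- The affine functions on `κ → ℝ`, spanned by the constant `1` (index `none`) and the
coordinates. -/
def affineFunctions : Submodule ℝ ((κ → ℝ) → ℝ) :=
  Submodule.span ℝ (Set.range fun o : Option κ => o.elim 1 fun i ρ => ρ i)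

instance [Finite κ] : FiniteDimensional ℝ (affineFunctions κ) :=
  .span_of_finite ℝ (Set.finite_range _)

theorem finrank_affineFunctions_le [Fintype κ] :
    finrank ℝ (affineFunctions κ) ≤ Fintype.card κ + 1 :=
  (finrank_range_le_card _).trans_eq Fintype.card_option

theorem one_mem_affineFunctions : 1 ∈ affineFunctions κ :=
  Submodule.subset_span ⟨none, rfl⟩

variable {κ}

theorem coordinate_mem_affineFunctions (i : κ) : (fun ρ => ρ i) ∈ affineFunctions κ :=
  Submodule.subset_span ⟨some i, rfl⟩

theorem sub_sub_const_mem_affineFunctions (i j : κ) (w : ℝ) :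
    (fun ρ => ρ i - ρ j - w) ∈ affineFunctions κ := by
  have const_mem : (fun _ => w) ∈ affineFunctions κ := by
    simpa [Pi.one_def, Pi.smul_def] using
      (affineFunctions κ).smul_mem w (one_mem_affineFunctions κ)
  exact sub_mem (sub_mem (coordinate_mem_affineFunctions i) (coordinate_mem_affineFunctions j))
    const_mem

end AffineFunctions

theorem mul_logb_sq_le {n d : ℕ} (hn : 2 ≤ n) (hd : d ≤ n + 1) :
    12 * d * Real.logb 2 (n ^ 2 : ℕ) ≤ 36 * n * Real.logb 2 n := by
  have two_le_n : (2 : ℝ) ≤ n := by exact_mod_cast hn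
  have d_le : (d : ℝ) ≤ n + 1 := by exact_mod_cast hd
  have logb_nonneg : 0 ≤ Real.logb 2 n := Real.logb_nonneg one_lt_two (by linarith)
  calc 12 * d * Real.logb 2 (n ^ 2 : ℕ) = 24 * d * Real.logb 2 n := by
        rw [Nat.cast_pow, Real.logb_pow, Nat.cast_ofNat]
        ring
    _ ≤ 36 * n * Real.logb 2 n := mul_le_mul_of_nonneg_right (by linarith) logb_nonneg

/-- there is an absolute constant `C > 0` such that for the class of
inconsistency functions `Δ_ρ(x) = Σ_{(i,j,w) ∈ T(x)} max{ρ_i − ρ_j − w, 0}` (where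
`|T(x)| ≤ n²`), any pairwise-distinct pseudo-shattered set of size `N` satisfies
`N ≤ C·n·log₂ n`, i.e. the pseudo-dimension is `O(n lg n)`. -/
theorem stmt_10 :
    ∃ C : ℝ, 0 < C ∧
      ∀ (n : ℕ), 2 ≤ n →
      ∀ (P : Type) (T : P → Finset (Fin n × Fin n × ℝ)),
        (∀ x : P, (T x).card ≤ n ^ 2) →
      ∀ (N : ℕ) (x : Fin N → P), Function.Injective x →
        (∃ z : Fin N → ℝ, ∀ b : Fin N → Bool, ∃ ρ : Fin n → ℝ,
          ∀ i : Fin N,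
            (z i ≤ ∑ t ∈ T (x i), max (ρ t.1 - ρ t.2.1 - t.2.2) 0 ↔ b i = true)) →
      (N : ℝ) ≤ C * n * Real.logb 2 n := by
  refine ⟨36, by norm_num, fun n hn P T hT N x _ hx => ?_⟩
  have finrank_le : finrank ℝ (affineFunctions (Fin n)) ≤ n + 1 := by
    simpa only [Fintype.card_fin] using finrank_affineFunctions_le (Fin n)
  have card_le := stmt_10_general (one_mem_affineFunctions (Fin n))
    (fun t : Fin n × Fin n × ℝ => sub_sub_const_mem_affineFunctions t.1 t.2.1 t.2.2)
    (hn.trans (Nat.le_self_pow two_ne_zero n)) hT hx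
  rw [Fintype.card_fin] at card_le
  exact card_le.trans (mul_logb_sq_le hn finrank_le)
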